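/- arXiv:1510.05330 — 2 statements merged into one kernel-verified Lean document; each statement's English description precedes it below -/
import Mathlib

section
/- Let n ≥ 2 and write B_n := P/I_n. Let z̄ and ā denote the classes in B_n of y_n − x_n and of a_{nn} = ∏_{i=1}^{n−1}(y_i − x_n) respectively. Then: (i) the annihilator {g ∈ B_n : z̄·g = 0} equals the principal ideal ā·B_n; and (ii) the annihilator {g ∈ B_n : ā·g = 0} equals the principal ideal z̄·B_n. Consequently, the semi-infinite two-periodic complexes D_1 : ⋯ → B_n →(ā) B_n →(z̄) B_n →(π) B_{n−1} → 0 and D_2 : 0 → B_{n−1} →(μ) B_n →(z̄) B_n →(ā) B_n → ⋯ are exact, where π is the canonical quotient map and μ is induced by multiplication by a_{nn}. -/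
/-!
Write `r_m = e_m(y) - e_m(x)`, `z = y_n - x_n`, `a = ∏_{i<n} (y_i - x_n)` and
`K = (r_1, …, r_{n-1})`. Everything follows from the fact that `r_n` is a nonzerodivisor modulo `K`.
Indeed, all coefficients of `∏ (T - y_i) - ∏ (T - x_i)` except the constant one lie in `K`; evaluating
at `T = x_n` gives `z a ≡ r_n` modulo `K`. Hence `I_n = K + (z a)`, `I_{n-1} = K + (z)`, and `z`, `a`
are themselves nonzerodivisors modulo `K`, so that multiples of `z a` can be cancelled by `z` or by `a`.

For the nonzerodivisor property, `P / K` is identified with the universal splitting algebra over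
`A = ℚ[x][w]` of the monic polynomial `∏ (T - x_i) - w`, in which `w` corresponds to `± r_n`
(`mem_partialIdeal_of_rn_mul_mem`). A universal splitting algebra of a monic polynomial is obtained by
successively adjoining roots of monic polynomials, each step being free over the previous one, so it
preserves regularity of elements of the base ring (`mem_splitIdeal_of_C_mul_mem`). Both
identifications are only used through a pair of maps `φ`, `ψ` with `ψ ∘ φ` the quotient map.
-/

open MvPolynomial

noncomputable section

/-- The polynomial ring `P = ℚ[x_1,…,x_n,y_1,…,y_n]`, with `x`-variables indexed by
`Sum.inl` and `y`-variables indexed by `Sum.inr`. -/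
abbrev PP (n : ℕ) := MvPolynomial (Fin n ⊕ Fin n) ℚ

/-- The variable `x_m` (1-indexed, for `1 ≤ m ≤ n`). -/
def xv (n : ℕ) (m : ℕ) : PP n :=
  if h : 0 < n then X (Sum.inl ⟨(m - 1) % n, Nat.mod_lt _ h⟩) else 0

/-- The variable `y_m` (1-indexed, for `1 ≤ m ≤ n`). -/
def yv (n : ℕ) (m : ℕ) : PP n :=
  if h : 0 < n then X (Sum.inr ⟨(m - 1) % n, Nat.mod_lt _ h⟩) else 0

/-- `e_m(x_1,…,x_n)` inside `P`. -/
def ex (n m : ℕ) : PP n := rename Sum.inl (esymm (Fin n) ℚ m)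

/-- `e_m(y_1,…,y_n)` inside `P`. -/
def ey (n m : ℕ) : PP n := rename Sum.inr (esymm (Fin n) ℚ m)

/-- The ideal `I_k ⊆ P`, generated by `e_m(y) − e_m(x)` for `1 ≤ m ≤ k` together with
`y_m − x_m` for `k+1 ≤ m ≤ n` (in 0-indexed terms, `y_i - x_i` for indices `i ≥ k`). -/
def Ik (n k : ℕ) : Ideal (PP n) :=
  Ideal.span ((fun m => ey n m - ex n m) '' {m : ℕ | 1 ≤ m ∧ m ≤ k} ∪
    (fun i : Fin n => X (Sum.inr i) - X (Sum.inl i)) '' {i : Fin n | k ≤ (i : ℕ)})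

/-! ### Universal splitting algebras -/

/-- The ideal of relations of the universal splitting algebra of `F`: modulo this ideal,
`F = ∏ (T - X_i)`. Only meaningful when `F` is monic of degree `n`. -/
def splitIdeal {A : Type*} [CommRing A] (n : ℕ) (F : Polynomial A) : Ideal (MvPolynomial (Fin n) A) :=
  Ideal.span (Set.range fun k : ℕ =>
    ((∏ i : Fin n, (Polynomial.X - Polynomial.C (X i))) - F.map C).coeff k)

/-- Universal property: a homomorphism kills `splitIdeal n F` exactly when it splits `F`. -/
lemma splitIdeal_le_ker_iff {A B : Type*} [CommRing A] [CommRing B] {n : ℕ} {F : Polynomial A}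
    (f : MvPolynomial (Fin n) A →+* B) :
    splitIdeal n F ≤ RingHom.ker f ↔
      ∏ i : Fin n, (Polynomial.X - Polynomial.C (f (X i))) = F.map (f.comp C) := by
  have key : ∏ i : Fin n, (Polynomial.X - Polynomial.C (f (X i))) - F.map (f.comp C) =
      ((∏ i : Fin n, (Polynomial.X - Polynomial.C (X i))) - F.map C).map f := by
    simp [Polynomial.map_sub, Polynomial.map_prod, Polynomial.map_map]
  rw [← sub_eq_zero, key, splitIdeal, Ideal.span_le, Polynomial.ext_iff]
  simp only [Polynomial.coeff_map, Polynomial.coeff_zero]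
  constructor
  · intro h k
    exact h ⟨k, rfl⟩
  · rintro h _ ⟨k, rfl⟩
    exact h k

/-- In the universal splitting algebra of a monic polynomial over `A`, regular elements of `A` stay
regular. By induction: adjoining one root is a free extension, over which the splitting algebra of the
remaining monic factor has to be formed. -/
lemma mem_splitIdeal_of_C_mul_mem (n : ℕ) : ∀ {A : Type} [CommRing A] (F : Polynomial A),
    F.Monic → F.natDegree = n → ∀ a : A, IsRegular a → ∀ p : MvPolynomial (Fin n) A,
    C a * p ∈ splitIdeal n F → p ∈ splitIdeal n F := by
  induction n with
  | zero =>
    intro A _ F hF hd a ha p hp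
    have hF1 : F = 1 := hF.natDegree_eq_zero.mp hd
    subst hF1
    have h0 : splitIdeal 0 (1 : Polynomial A) = ⊥ := by
      simp [splitIdeal]
    rw [h0, Ideal.mem_bot] at hp ⊢
    ext m
    have := congrArg (coeff m) hp
    rw [coeff_C_mul, coeff_zero] at this
    exact ha.left (by simpa using this)
  | succ n ih =>
    intro A _ F hF hd a ha p hp
    have : Nontrivial A := by
      by_contra h
      rw [not_nontrivial_iff_subsingleton] at h
      rw [Subsingleton.elim F 0] at hd
      simp at hd
    have : Nontrivial (AdjoinRoot F) := by
      refine Ideal.Quotient.nontrivial_iff.mpr ?_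
      rw [Ne, Ideal.span_singleton_eq_top]
      intro hu
      rw [hF.eq_one_of_isUnit hu] at hd
      simp at hd
    have := hF.free_adjoinRoot
    have hreg : IsRegular (AdjoinRoot.of F a) := by
      have h := Module.Flat.isSMulRegular_of_isRegular (M := AdjoinRoot F) ha
      rw [← isLeftRegular_iff_isRegular]
      intro u v huv
      refine h ?_
      simpa [Algebra.smul_def] using huv
    obtain ⟨F1, hF1⟩ : ∃ F1, F.map (AdjoinRoot.of F) =
        (Polynomial.X - Polynomial.C (AdjoinRoot.root F)) * F1 :=
      ⟨_, (Polynomial.mul_divByMonic_eq_iff_isRoot.mpr (AdjoinRoot.isRoot_root F)).symm⟩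
    have hmon : F1.Monic :=
      (Polynomial.monic_X_sub_C (AdjoinRoot.root F)).of_mul_monic_left (hF1 ▸ hF.map _)
    have hdeg : F1.natDegree = n := by
      have h := congrArg Polynomial.natDegree hF1
      rw [hF.natDegree_map, (Polynomial.monic_X_sub_C _).natDegree_mul hmon,
        Polynomial.natDegree_X_sub_C, hd] at h
      omega
    -- `φ` sends the first variable to the adjoined root.
    let φ : MvPolynomial (Fin (n + 1)) A →+* MvPolynomial (Fin n) (AdjoinRoot F) :=
      eval₂Hom (C.comp (AdjoinRoot.of F)) (Fin.cons (C (AdjoinRoot.root F)) X)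
    have hφ : splitIdeal (n + 1) F ≤
        RingHom.ker ((Ideal.Quotient.mk (splitIdeal n F1)).comp φ) := by
      rw [splitIdeal_le_ker_iff]
      have h1 := (splitIdeal_le_ker_iff (F := F1) (Ideal.Quotient.mk (splitIdeal n F1))).mp
        (by rw [Ideal.mk_ker])
      have h2 : ((Ideal.Quotient.mk (splitIdeal n F1)).comp φ).comp C =
          ((Ideal.Quotient.mk (splitIdeal n F1)).comp C).comp (AdjoinRoot.of F) := by
        ext; simp [φ]
      rw [h2, ← Polynomial.map_map, hF1, Polynomial.map_mul, ← h1, Fin.prod_univ_succ]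
      simp [φ]
    have hr : Polynomial.eval₂ ((Ideal.Quotient.mk (splitIdeal (n + 1) F)).comp C)
        (Ideal.Quotient.mk (splitIdeal (n + 1) F) (X 0)) F = 0 := by
      have h1 := (splitIdeal_le_ker_iff (F := F) (Ideal.Quotient.mk (splitIdeal (n + 1) F))).mp
        (by rw [Ideal.mk_ker])
      rw [← Polynomial.eval_map, ← h1, Fin.prod_univ_succ]
      simp
    let ψ : MvPolynomial (Fin n) (AdjoinRoot F) →+*
        MvPolynomial (Fin (n + 1)) A ⧸ splitIdeal (n + 1) F :=
      eval₂Hom (AdjoinRoot.lift _ _ hr) (fun i => Ideal.Quotient.mk _ (X i.succ))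
    have hψC : ψ.comp C = AdjoinRoot.lift _ _ hr := by
      ext <;> simp [ψ]
    have hψ : splitIdeal n F1 ≤ RingHom.ker ψ := by
      rw [splitIdeal_le_ker_iff]
      have h1 := (splitIdeal_le_ker_iff (F := F) (Ideal.Quotient.mk (splitIdeal (n + 1) F))).mp
        (by rw [Ideal.mk_ker])
      -- The monic factor `T - y_0` is cancelled from both factorizations of `F`.
      refine (Polynomial.monic_X_sub_C
        (Ideal.Quotient.mk (splitIdeal (n + 1) F) (X 0))).isRegular.left ?_
      have h3 := congrArg (Polynomial.map (ψ.comp C)) hF1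
      rw [Polynomial.map_mul, Polynomial.map_map] at h3
      have h4 : (ψ.comp C).comp (AdjoinRoot.of F) =
          (Ideal.Quotient.mk (splitIdeal (n + 1) F)).comp C := by
        rw [hψC]; exact AdjoinRoot.lift_comp_of ..
      have h5 : (ψ.comp C) (AdjoinRoot.root F) =
          Ideal.Quotient.mk (splitIdeal (n + 1) F) (X 0) := by
        rw [hψC]; exact AdjoinRoot.lift_root ..
      rw [h4, ← h1, Fin.prod_univ_succ, Polynomial.map_sub, Polynomial.map_X, Polynomial.map_C,
        h5] at h3
      simpa [ψ] using h3
    have hψφ : ψ.comp φ = Ideal.Quotient.mk (splitIdeal (n + 1) F) := by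
      refine MvPolynomial.ringHom_ext ?_ ?_
      · intro r
        simp [φ, ψ]
      · intro i
        refine Fin.cases ?_ (fun j => ?_) i
        · simp [φ, ψ]
        · simp [φ, ψ]
    have h6 : C (AdjoinRoot.of F a) * φ p ∈ splitIdeal n F1 := by
      have h := hφ hp
      rw [RingHom.mem_ker, RingHom.comp_apply, Ideal.Quotient.eq_zero_iff_mem, map_mul] at h
      simpa [φ] using h
    have h7 := hψ (ih F1 hmon hdeg _ hreg _ h6)
    rwa [RingHom.mem_ker, ← RingHom.comp_apply, hψφ, Ideal.Quotient.eq_zero_iff_mem] at h7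

/-! ### The ideal `(r_1, …, r_{n-1})` -/

/-- The ideal `K = (r_1, …, r_{n-1})`, where `r_m = e_m(y) - e_m(x)`. -/
def partialIdeal (n : ℕ) : Ideal (PP n) :=
  Ideal.span ((fun m => ey n m - ex n m) '' {m : ℕ | 1 ≤ m ∧ m ≤ n - 1})

/-- The polynomial `∏ (T - y_i) - ∏ (T - x_i)` over `P`. -/
def diffPoly (n : ℕ) : Polynomial (PP n) :=
  ∏ i : Fin n, (Polynomial.X - Polynomial.C (X (Sum.inr i))) -
    ∏ i : Fin n, (Polynomial.X - Polynomial.C (X (Sum.inl i)))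

lemma coeff_prod_X_sub_C_rename {n : ℕ} (s : Fin n → Fin n ⊕ Fin n) {m : ℕ} (hm : m ≤ n) :
    (∏ i : Fin n, (Polynomial.X - Polynomial.C (X (s i) : PP n))).coeff (n - m) =
      (-1) ^ m * rename s (esymm (Fin n) ℚ m) := by
  have h := Multiset.prod_X_sub_C_coeff
    (Finset.univ.val.map (fun i : Fin n => (X (s i) : PP n))) (k := n - m) (by simp)
  have hc : (Finset.univ.val.map (fun i : Fin n => (X (s i) : PP n))).card - (n - m) = m := by
    simp; omega
  rw [hc, Multiset.map_map] at h
  have h2 : rename s (esymm (Fin n) ℚ m) =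
      (Finset.univ.val.map (fun i : Fin n => (X (s i) : PP n))).esymm m := by
    rw [← aeval_esymm_eq_multiset_esymm (Fin n) ℚ m, rename_eq_aeval]
    rfl
  rw [h2, ← h]
  rfl

lemma diffPoly_coeff {n m : ℕ} (hm : m ≤ n) :
    (diffPoly n).coeff (n - m) = (-1) ^ m * (ey n m - ex n m) := by
  rw [diffPoly, Polynomial.coeff_sub, coeff_prod_X_sub_C_rename _ hm,
    coeff_prod_X_sub_C_rename _ hm, ey, ex]
  ring

lemma diffPoly_coeff_zero (n : ℕ) :
    (diffPoly n).coeff 0 = (-1) ^ n * (ey n n - ex n n) := by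
  simpa using diffPoly_coeff (le_refl n)

lemma diffPoly_coeff_of_gt {n k : ℕ} (hk : n < k) : (diffPoly n).coeff k = 0 := by
  refine Polynomial.coeff_eq_zero_of_natDegree_lt (lt_of_le_of_lt ?_ hk)
  refine (Polynomial.natDegree_sub_le _ _).trans ?_
  simp [Polynomial.natDegree_finsetProd_X_sub_C_eq_card]

/-- The ideal `(r_1, …, r_{n-1})` is killed exactly when `∏ (T - y_i)` and `∏ (T - x_i)` become equal
up to a constant. -/
lemma partialIdeal_le_ker_iff {n : ℕ} {B : Type*} [CommRing B] (f : PP n →+* B) :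
    partialIdeal n ≤ RingHom.ker f ↔ ∀ k, k ≠ 0 → ((diffPoly n).map f).coeff k = 0 := by
  constructor
  · intro h k hk
    rw [Polynomial.coeff_map]
    rcases lt_trichotomy k n with hkn | rfl | hkn
    · have h1 : (diffPoly n).coeff k = (-1) ^ (n - k) * (ey n (n - k) - ex n (n - k)) := by
        rw [← diffPoly_coeff (by omega), Nat.sub_sub_self hkn.le]
      have h2 : ey n (n - k) - ex n (n - k) ∈ RingHom.ker f :=
        h (Ideal.subset_span ⟨n - k, ⟨by omega, by omega⟩, rfl⟩)
      rw [h1, map_mul, RingHom.mem_ker.mp h2, mul_zero]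
    · have h1 := diffPoly_coeff (n := k) (Nat.zero_le k)
      rw [Nat.sub_zero] at h1
      simp [h1, ey, ex, esymm_zero]
    · rw [diffPoly_coeff_of_gt hkn, map_zero]
  · intro h
    rw [partialIdeal, Ideal.span_le]
    rintro _ ⟨m, ⟨hm1, hm2⟩, rfl⟩
    have h1 := h (n - m) (by omega)
    rw [Polynomial.coeff_map, diffPoly_coeff (by omega), map_mul] at h1
    have hu : IsUnit (f ((-1) ^ m)) := (isUnit_one.neg.pow m).map f
    exact hu.mul_right_eq_zero.mp h1

/-- Modulo `K = (r_1, …, r_{n-1})`, the polynomial `∏ (T - y_i) - ∏ (T - x_i)` is the constant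
`(-1)^n r_n`. -/
lemma diffPoly_map_mk (n : ℕ) :
    (diffPoly n).map (Ideal.Quotient.mk (partialIdeal n)) =
      Polynomial.C (Ideal.Quotient.mk (partialIdeal n) ((-1) ^ n * (ey n n - ex n n))) := by
  ext k
  rcases eq_or_ne k 0 with rfl | hk
  · rw [Polynomial.coeff_map, diffPoly_coeff_zero, Polynomial.coeff_C_zero]
  · rw [(partialIdeal_le_ker_iff _).mp (by rw [Ideal.mk_ker]) k hk, Polynomial.coeff_C_of_ne_zero hk]

/-- `r_n` is a nonzerodivisor modulo `(r_1, …, r_{n-1})`: the quotient is the universal splitting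
algebra of `∏ (T - x_i) - w` over `ℚ[x][w]`, and `r_n` corresponds to `± w`. -/
lemma mem_partialIdeal_of_rn_mul_mem {n : ℕ} (hn : 0 < n) (p : PP n)
    (hp : (ey n n - ex n n) * p ∈ partialIdeal n) : p ∈ partialIdeal n := by
  let F0 : Polynomial (MvPolynomial (Fin n) ℚ) := ∏ i : Fin n, (Polynomial.X - Polynomial.C (X i))
  let w : Polynomial (MvPolynomial (Fin n) ℚ) := Polynomial.X
  let F : Polynomial (Polynomial (MvPolynomial (Fin n) ℚ)) := F0.map Polynomial.C - Polynomial.C w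
  have hF0 : F0.Monic := Polynomial.monic_prod_X_sub_C _ _
  have hF0d : F0.natDegree = n := by
    simp [F0, Polynomial.natDegree_finsetProd_X_sub_C_eq_card]
  have hF : F.Monic := by
    refine (hF0.map _).sub_of_left ?_
    rw [hF0.degree_map, Polynomial.degree_eq_natDegree hF0.ne_zero, hF0d]
    exact lt_of_le_of_lt Polynomial.degree_C_le (by exact_mod_cast hn)
  have hFd : F.natDegree = n := by
    simp only [F]
    rw [Polynomial.natDegree_sub_C, hF0.natDegree_map, hF0d]
  have hw : IsRegular w := Polynomial.monic_X.isRegular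
  let J := splitIdeal n F
  let φ : PP n →+* MvPolynomial (Fin n) (Polynomial (MvPolynomial (Fin n) ℚ)) :=
    (aeval (Sum.elim (fun i => C (Polynomial.C (X i))) X)).toRingHom
  have hφl : ∀ i, φ (X (Sum.inl i)) = C (Polynomial.C (X i)) := fun i => by simp [φ]
  have hφr : ∀ i, φ (X (Sum.inr i)) = X i := fun i => by simp [φ]
  have hφd : (diffPoly n).map ((Ideal.Quotient.mk J).comp φ) =
      - Polynomial.C (Ideal.Quotient.mk J (C w)) := by
    have h1 := (splitIdeal_le_ker_iff (F := F) (Ideal.Quotient.mk J)).mp (by rw [Ideal.mk_ker])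
    have h2 : F.map ((Ideal.Quotient.mk J).comp C) =
        ∏ i : Fin n, (Polynomial.X - Polynomial.C (Ideal.Quotient.mk J (C (Polynomial.C (X i))))) -
          Polynomial.C (Ideal.Quotient.mk J (C w)) := by
      simp [F, F0, Polynomial.map_sub, Polynomial.map_prod]
    rw [h2] at h1
    simp only [diffPoly, Polynomial.map_sub, Polynomial.map_prod, Polynomial.map_X,
      Polynomial.map_C, RingHom.comp_apply, hφl, hφr, h1]
    ring
  have hφK : partialIdeal n ≤ RingHom.ker ((Ideal.Quotient.mk J).comp φ) := by
    rw [partialIdeal_le_ker_iff]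
    intro k hk
    rw [hφd, Polynomial.coeff_neg, Polynomial.coeff_C_of_ne_zero hk, neg_zero]
  have hφrn : Ideal.Quotient.mk J (C w) =
      - ((-1) ^ n * Ideal.Quotient.mk J (φ (ey n n - ex n n))) := by
    have h := congrArg (fun q => Polynomial.coeff q 0) hφd
    simp only [Polynomial.coeff_map, diffPoly_coeff_zero, Polynomial.coeff_neg,
      Polynomial.coeff_C_zero] at h
    rw [← neg_eq_iff_eq_neg, ← h]
    simp
  let w' : PP n ⧸ partialIdeal n :=
    - Ideal.Quotient.mk (partialIdeal n) ((-1) ^ n * (ey n n - ex n n))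
  let ψ : MvPolynomial (Fin n) (Polynomial (MvPolynomial (Fin n) ℚ)) →+* PP n ⧸ partialIdeal n :=
    eval₂Hom (Polynomial.eval₂RingHom
      ((Ideal.Quotient.mk (partialIdeal n)).comp (rename Sum.inl).toRingHom) w')
      (fun i => Ideal.Quotient.mk _ (X (Sum.inr i)))
  have hψJ : J ≤ RingHom.ker ψ := by
    rw [splitIdeal_le_ker_iff]
    have h2 : F.map (ψ.comp C) =
        ∏ i : Fin n, (Polynomial.X -
          Polynomial.C (Ideal.Quotient.mk (partialIdeal n) (X (Sum.inl i)))) -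
          Polynomial.C w' := by
      simp [F, F0, w, ψ, Polynomial.map_sub, Polynomial.map_prod]
    have h3 := diffPoly_map_mk n
    simp only [diffPoly, Polynomial.map_sub, Polynomial.map_prod, Polynomial.map_X,
      Polynomial.map_C] at h3
    rw [h2]
    simp only [w', Polynomial.C_neg, sub_neg_eq_add, ← h3]
    simp [ψ]
  have hψφ : ψ.comp φ = Ideal.Quotient.mk (partialIdeal n) := by
    refine MvPolynomial.ringHom_ext' (RingHom.ext_rat _ _) ?_
    rintro (i | i)
    · rw [RingHom.comp_apply, hφl]
      simp [ψ]
    · rw [RingHom.comp_apply, hφr]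
      simp [ψ]
  have h6 : C w * φ p ∈ J := by
    have h := hφK hp
    rw [RingHom.mem_ker, RingHom.comp_apply, map_mul, map_mul] at h
    rw [← Ideal.Quotient.eq_zero_iff_mem, map_mul, hφrn]
    linear_combination (-(-1) ^ n) * h
  have h7 := hψJ (mem_splitIdeal_of_C_mul_mem n F hF hFd w hw _ h6)
  rwa [RingHom.mem_ker, ← RingHom.comp_apply, hψφ, Ideal.Quotient.eq_zero_iff_mem] at h7

/-! ### The ideals `I_n` and `I_{n-1}` -/

lemma sub_mul_prod_eq {n : ℕ} (hn : 0 < n) :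
    (yv n n - xv n n) * ∏ i ∈ Finset.Icc 1 (n - 1), (yv n i - xv n n) =
      ∏ i : Fin n, (X (Sum.inr i) - xv n n) := by
  obtain ⟨N, rfl⟩ : ∃ N, n = N + 1 := ⟨n - 1, by omega⟩
  have h1 : ∀ i : Fin (N + 1), (X (Sum.inr i) : PP (N + 1)) = yv (N + 1) (i + 1) := by
    intro i
    simp [yv, Nat.mod_eq_of_lt i.isLt]
  simp only [h1]
  rw [Fin.prod_univ_eq_prod_range (fun i => yv (N + 1) (i + 1) - xv (N + 1) (N + 1)) (N + 1),
    Finset.prod_range_succ, mul_comm, Nat.add_sub_cancel]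
  congr 1
  rw [Finset.range_eq_Ico, Finset.prod_Ico_add' (fun i => yv (N + 1) i - xv (N + 1) (N + 1)) 0 N 1]
  rfl

/-- `z a ≡ r_n` modulo `(r_1, …, r_{n-1})`, by evaluating `∏ (T - y_i) - ∏ (T - x_i)` at `x_n`. -/
lemma za_sub_rn_mem {n : ℕ} (hn : 0 < n) :
    (yv n n - xv n n) * (∏ i ∈ Finset.Icc 1 (n - 1), (yv n i - xv n n)) - (ey n n - ex n n) ∈
      partialIdeal n := by
  rw [sub_mul_prod_eq hn]
  have hx : xv n n = X (Sum.inl ⟨n - 1, by omega⟩) := by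
    simp [xv, hn, Nat.mod_eq_of_lt (show n - 1 < n by omega)]
  have h1 : (diffPoly n).eval (xv n n) = (-1) ^ n * ∏ i : Fin n, (X (Sum.inr i) - xv n n) := by
    have h2 : ∏ i : Fin n, (xv n n - X (Sum.inl i)) = 0 :=
      Finset.prod_eq_zero (Finset.mem_univ ⟨n - 1, by omega⟩) (by rw [hx, sub_self])
    have h3 : ∏ i : Fin n, (xv n n - X (Sum.inr i)) =
        ∏ i : Fin n, ((-1) * (X (Sum.inr i) - xv n n)) :=
      Finset.prod_congr rfl fun i _ => by ring
    rw [diffPoly, Polynomial.eval_sub, Polynomial.eval_prod, Polynomial.eval_prod]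
    simp only [Polynomial.eval_sub, Polynomial.eval_X, Polynomial.eval_C]
    rw [h2, sub_zero, h3, Finset.prod_mul_distrib]
    simp
  have h4 := congrArg (Polynomial.eval (Ideal.Quotient.mk (partialIdeal n) (xv n n)))
    (diffPoly_map_mk n)
  rw [Polynomial.eval_map, Polynomial.eval₂_hom, h1, Polynomial.eval_C, map_mul, map_mul] at h4
  rw [← Ideal.Quotient.eq_zero_iff_mem, map_sub, sub_eq_zero]
  have hu : IsUnit (Ideal.Quotient.mk (partialIdeal n) ((-1) ^ n)) :=
    (isUnit_one.neg.pow n).map _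
  exact hu.mul_left_cancel h4

lemma mem_Ik_self_iff {n : ℕ} (hn : 0 < n) (p : PP n) :
    p ∈ Ik n n ↔ ∃ c, p - (yv n n - xv n n) *
      (∏ i ∈ Finset.Icc 1 (n - 1), (yv n i - xv n n)) * c ∈ partialIdeal n := by
  have hset : Ik n n = Ideal.span {ey n n - ex n n} ⊔ partialIdeal n := by
    rw [Ik, partialIdeal, ← Ideal.span_union]
    congr 1
    ext q
    constructor
    · rintro (⟨m, ⟨h1, h2⟩, rfl⟩ | ⟨i, hi, rfl⟩)
      · rcases Nat.lt_or_ge m n with h | h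
        · exact Or.inr ⟨m, ⟨h1, by omega⟩, rfl⟩
        · obtain rfl : m = n := le_antisymm h2 h
          exact Or.inl rfl
      · exact absurd i.isLt (not_lt.mpr hi)
    · rintro (rfl | ⟨m, ⟨h1, h2⟩, rfl⟩)
      · exact Or.inl ⟨n, ⟨hn, le_refl n⟩, rfl⟩
      · exact Or.inl ⟨m, ⟨h1, by omega⟩, rfl⟩
  have hza := za_sub_rn_mem hn
  rw [hset, Ideal.mem_span_singleton_sup]
  constructor
  · rintro ⟨c, b, hb, rfl⟩
    refine ⟨c, ?_⟩
    have := (partialIdeal n).sub_mem hb ((partialIdeal n).mul_mem_left c hza)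
    convert this using 1
    ring
  · rintro ⟨c, hc⟩
    refine ⟨c, _, (partialIdeal n).add_mem hc ((partialIdeal n).mul_mem_left c hza), ?_⟩
    ring

lemma mem_Ik_pred_iff {n : ℕ} (hn : 0 < n) (p : PP n) :
    p ∈ Ik n (n - 1) ↔ ∃ c, p - (yv n n - xv n n) * c ∈ partialIdeal n := by
  have hz : yv n n - xv n n =
      X (Sum.inr ⟨n - 1, by omega⟩) - X (Sum.inl ⟨n - 1, by omega⟩) := by
    simp [xv, yv, hn, Nat.mod_eq_of_lt (show n - 1 < n by omega)]
  have hset : Ik n (n - 1) = Ideal.span {yv n n - xv n n} ⊔ partialIdeal n := by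
    rw [Ik, partialIdeal, Ideal.span_union, sup_comm]
    congr 2
    ext q
    constructor
    · rintro ⟨i, hi, rfl⟩
      obtain rfl : i = ⟨n - 1, by omega⟩ := by
        ext
        have h1 := i.isLt
        have h2 : n - 1 ≤ (i : ℕ) := hi
        simp only
        omega
      exact hz.symm
    · rintro rfl
      exact ⟨⟨n - 1, by omega⟩, le_refl (n - 1), hz.symm⟩
  rw [hset, Ideal.mem_span_singleton_sup]
  constructor
  · rintro ⟨c, b, hb, rfl⟩
    exact ⟨c, by convert hb using 1; ring⟩
  · rintro ⟨c, hc⟩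
    exact ⟨c, _, hc, by ring⟩

/-- in `B_n := P/I_n`, with `z̄` the class of `y_n − x_n` and `ā` the class
of `a_{nn} = ∏_{i=1}^{n−1}(y_i − x_n)`:
(i) the annihilator of `z̄` is the principal ideal `ā·B_n`;
(ii) the annihilator of `ā` is the principal ideal `z̄·B_n`.
Consequently the semi-infinite two-periodic complexes
`D_1 : ⋯ → B_n →(ā) B_n →(z̄) B_n →(π) B_{n−1} → 0` and
`D_2 : 0 → B_{n−1} →(μ) B_n →(z̄) B_n →(ā) B_n → ⋯` are exact, where `π` is the canonical
quotient map and `μ` is induced by multiplication by `a_{nn}`. -/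
theorem annihilators_and_periodic_exactness (n : ℕ) (hn : 2 ≤ n)
    (π : (PP n ⧸ Ik n n) →ₗ[PP n] (PP n ⧸ Ik n (n - 1)))
    (hπ : ∀ p : PP n, π (Ideal.Quotient.mk (Ik n n) p) = Ideal.Quotient.mk (Ik n (n - 1)) p)
    (μ : (PP n ⧸ Ik n (n - 1)) →ₗ[PP n] (PP n ⧸ Ik n n))
    (hμ : ∀ p : PP n, μ (Ideal.Quotient.mk (Ik n (n - 1)) p) =
      Ideal.Quotient.mk (Ik n n) ((∏ i ∈ Finset.Icc 1 (n - 1), (yv n i - xv n n)) * p)) :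
    -- (i): ann(z̄) = ā·B_n
    (∀ g : PP n ⧸ Ik n n,
      Ideal.Quotient.mk (Ik n n) (yv n n - xv n n) * g = 0 ↔
      ∃ h : PP n ⧸ Ik n n,
        g = Ideal.Quotient.mk (Ik n n) (∏ i ∈ Finset.Icc 1 (n - 1), (yv n i - xv n n)) * h) ∧
    -- (ii): ann(ā) = z̄·B_n
    (∀ g : PP n ⧸ Ik n n,
      Ideal.Quotient.mk (Ik n n) (∏ i ∈ Finset.Icc 1 (n - 1), (yv n i - xv n n)) * g = 0 ↔
      ∃ h : PP n ⧸ Ik n n, g = Ideal.Quotient.mk (Ik n n) (yv n n - xv n n) * h) ∧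
    -- exactness of D_1 at its right end: `ker π = im z̄` and `π` surjective
    (∀ b : PP n ⧸ Ik n n,
      π b = 0 ↔ ∃ c, Ideal.Quotient.mk (Ik n n) (yv n n - xv n n) * c = b) ∧
    Function.Surjective π ∧
    -- exactness of D_2 at its left end: `μ` injective and `ker z̄ = im μ`
    Function.Injective μ ∧
    (∀ b : PP n ⧸ Ik n n,
      Ideal.Quotient.mk (Ik n n) (yv n n - xv n n) * b = 0 ↔ ∃ c, μ c = b) := by
  have hn0 : 0 < n := by omega
  have hI := mem_Ik_self_iff hn0
  have hI' := mem_Ik_pred_iff hn0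
  have hza := za_sub_rn_mem hn0
  set z := yv n n - xv n n with hz
  set a := ∏ i ∈ Finset.Icc 1 (n - 1), (yv n i - xv n n) with ha
  set K := partialIdeal n with hK
  have hzaK : ∀ p, z * a * p ∈ K → p ∈ K := by
    intro p hp
    refine mem_partialIdeal_of_rn_mul_mem hn0 p ?_
    have := K.sub_mem hp (K.mul_mem_right p hza)
    convert this using 1
    ring
  have hzK : ∀ p, z * p ∈ K → p ∈ K := by
    intro p hp
    refine hzaK p ?_
    convert K.mul_mem_left a hp using 1
    ring
  have haK : ∀ p, a * p ∈ K → p ∈ K := by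
    intro p hp
    refine hzaK p ?_
    convert K.mul_mem_left z hp using 1
    ring
  have hKI : K ≤ Ik n n := fun p hp => (hI p).mpr ⟨0, by simpa using hp⟩
  have hzaI : z * a ∈ Ik n n := (hI _).mpr ⟨1, by simp⟩
  have h1 : ∀ g : PP n ⧸ Ik n n, Ideal.Quotient.mk (Ik n n) z * g = 0 ↔
      ∃ h, g = Ideal.Quotient.mk (Ik n n) a * h := by
    intro g
    constructor
    · obtain ⟨p, rfl⟩ := Ideal.Quotient.mk_surjective g
      rw [← map_mul, Ideal.Quotient.eq_zero_iff_mem, hI]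
      rintro ⟨c, hc⟩
      refine ⟨Ideal.Quotient.mk _ c, ?_⟩
      rw [← map_mul, Ideal.Quotient.eq]
      refine hKI (hzK _ ?_)
      convert hc using 1
      ring
    · rintro ⟨h, rfl⟩
      rw [← mul_assoc, ← map_mul, Ideal.Quotient.eq_zero_iff_mem.mpr hzaI, zero_mul]
  have h2 : ∀ g : PP n ⧸ Ik n n, Ideal.Quotient.mk (Ik n n) a * g = 0 ↔
      ∃ h, g = Ideal.Quotient.mk (Ik n n) z * h := by
    intro g
    constructor
    · obtain ⟨p, rfl⟩ := Ideal.Quotient.mk_surjective g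
      rw [← map_mul, Ideal.Quotient.eq_zero_iff_mem, hI]
      rintro ⟨c, hc⟩
      refine ⟨Ideal.Quotient.mk _ c, ?_⟩
      rw [← map_mul, Ideal.Quotient.eq]
      refine hKI (haK _ ?_)
      convert hc using 1
      ring
    · rintro ⟨h, rfl⟩
      rw [← mul_assoc, ← map_mul, mul_comm a z, Ideal.Quotient.eq_zero_iff_mem.mpr hzaI, zero_mul]
  refine ⟨h1, h2, ?_, ?_, ?_, ?_⟩
  · intro b
    obtain ⟨p, rfl⟩ := Ideal.Quotient.mk_surjective b
    rw [hπ, Ideal.Quotient.eq_zero_iff_mem, hI']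
    constructor
    · rintro ⟨c, hc⟩
      refine ⟨Ideal.Quotient.mk _ c, ?_⟩
      rw [← map_mul, eq_comm, Ideal.Quotient.eq]
      exact hKI hc
    · rintro ⟨c, hc⟩
      obtain ⟨c, rfl⟩ := Ideal.Quotient.mk_surjective c
      rw [← map_mul, eq_comm, Ideal.Quotient.eq, hI] at hc
      obtain ⟨d, hd⟩ := hc
      refine ⟨c + a * d, ?_⟩
      convert hd using 1
      ring
  · intro b
    obtain ⟨p, rfl⟩ := Ideal.Quotient.mk_surjective b
    exact ⟨_, hπ p⟩
  · rw [injective_iff_map_eq_zero]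
    intro b
    obtain ⟨p, rfl⟩ := Ideal.Quotient.mk_surjective b
    rw [hμ, Ideal.Quotient.eq_zero_iff_mem, Ideal.Quotient.eq_zero_iff_mem, hI, hI']
    rintro ⟨c, hc⟩
    refine ⟨c, haK _ ?_⟩
    convert hc using 1
    ring
  · intro b
    rw [h1]
    constructor
    · rintro ⟨h, rfl⟩
      obtain ⟨p, rfl⟩ := Ideal.Quotient.mk_surjective h
      exact ⟨Ideal.Quotient.mk _ p, by rw [hμ, map_mul]⟩
    · rintro ⟨c, rfl⟩
      obtain ⟨p, rfl⟩ := Ideal.Quotient.mk_surjective c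
      exact ⟨Ideal.Quotient.mk _ p, by rw [hμ, map_mul]⟩

end
end

section
/- Let n ≥ 2, R = ℚ[x_1,…,x_n], R^I = R^{S_{n−1}} and R^W = R^{S_n}. Then the tensor product R^I ⊗_{R^W} R^I, regarded as a right R^I-module via the action on the second tensor factor, is free with basis {x_n^i ⊗ 1 : 0 ≤ i ≤ n−1}. -/
/-!
The ring `R^I` is itself free over `R^W` with basis `1, x_n, …, x_n^{n-1}`; the theorem is the base
change of this basis along `R^W → R^I`, read in the second tensor factor (`TTcomm`).

*Independence* (`linearIndependent_xnpow`). A relation `∑ c_i x_n^i = 0` with symmetric `c_i` is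
carried by the transposition of `j` and `n` to `∑ c_i x_j^i = 0`. So the polynomial `∑ c_i T^i`, of
degree less than `n`, has the `n` distinct roots `x_1, …, x_n` in the domain `R`, and vanishes.

*Generation* (`span_xnpow`). First, `R^I = R^W[x_n]` (`RI_le_adjoinLast`): writing `f ∈ R^I` as a
polynomial in `x_n`, its coefficients are symmetric in `x_1, …, x_{n-1}`, hence polynomials in the
elementary symmetric polynomials `e'_k` of these variables, and
`e'_{k+1} = e_{k+1} - x_n e'_k` shows inductively that `e'_k ∈ R^W[x_n]`.
Second, `x_n` is a root of the monic polynomial `∏ (T - x_i)` of degree `n` over `R^W`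
(`exists_monic_root`), so reduction modulo it leaves only powers `x_n^i` with `i < n`.
-/

open MvPolynomial

set_option synthInstance.maxHeartbeats 1000000
set_option maxHeartbeats 1600000

noncomputable section

/-- The polynomial ring `R = ℚ[x_1,…,x_n]`. -/
abbrev Rr (n : ℕ) := MvPolynomial (Fin n) ℚ

/-- The subalgebra `R^{S_k}` of polynomials invariant under all permutations of the
variables `x_1,…,x_k` which fix the remaining variables (0-indexed: permutations `g` of
`Fin n` with `g i = i` whenever `k ≤ i`). -/
def invar (n k : ℕ) : Subalgebra ℚ (Rr n) :=
  ⨅ g ∈ {g : Equiv.Perm (Fin n) | ∀ i : Fin n, k ≤ (i : ℕ) → g i = i},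
    AlgHom.equalizer (rename (g : Fin n → Fin n)) (AlgHom.id ℚ (Rr n))

/-- `R^W = R^{S_n}`, the symmetric polynomials. -/
abbrev RWa (n : ℕ) : Subalgebra ℚ (Rr n) := invar n n

/-- `R^I = R^{S_{n−1}}`. -/
abbrev RIa (n : ℕ) : Subalgebra ℚ (Rr n) := invar n (n - 1)

lemma invar_antitone (n : ℕ) {k l : ℕ} (h : k ≤ l) : invar n l ≤ invar n k := by
  refine le_iInf₂ fun g hg => ?_
  exact iInf₂_le g (fun i hi => hg i (h.trans hi))

/-- `R^{S_n} ⊆ R^{S_{n−1}}`. -/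
lemma RW_le_RI (n : ℕ) : RWa n ≤ RIa n := invar_antitone n (Nat.sub_le n 1)

/-- `R^{S_{n−1}}` as an algebra (in particular, a module) over `R^{S_n}`. -/
instance algebraRWRI (n : ℕ) : Algebra (RWa n) (RIa n) :=
  ((Subalgebra.inclusion (RW_le_RI n)).toRingHom).toAlgebra

/-- The variable `x_n` (the last one), as an element of `R`. -/
def xnn (n : ℕ) : Rr n :=
  if h : 0 < n then X (⟨(n - 1) % n, Nat.mod_lt _ h⟩ : Fin n) else 0

lemma mem_invar_iff (n k : ℕ) (x : Rr n) :
    x ∈ invar n k ↔ ∀ g : Equiv.Perm (Fin n),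
      (∀ i : Fin n, k ≤ (i : ℕ) → g i = i) → rename (g : Fin n → Fin n) x = x := by
  simp [invar, Algebra.mem_iInf, AlgHom.mem_equalizer]

lemma xnn_mem_RI (n : ℕ) : xnn n ∈ RIa n := by
  rw [mem_invar_iff]
  intro g hg
  unfold xnn
  split_ifs with h
  · rw [rename_X, hg]
    have : (n - 1) % n = n - 1 := Nat.mod_eq_of_lt (by omega)
    simp [this]
  · simp

/-- The element `x_n^k` of `R^{S_{n−1}}`. -/
def xnpow (n k : ℕ) : RIa n := ⟨xnn n ^ k, pow_mem (xnn_mem_RI n) k⟩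

/-- `e_m(x_1,…,x_{n−1})`, as an element of `R = ℚ[x_1,…,x_n]`. -/
def esymmFirst (n m : ℕ) : Rr n :=
  rename (Fin.castLE (Nat.sub_le n 1)) (esymm (Fin (n - 1)) ℚ m)

lemma esymmFirst_mem_RI (n m : ℕ) : esymmFirst n m ∈ RIa n := by
  rw [mem_invar_iff]
  intro g hg
  unfold esymmFirst
  have key : ∀ i : Fin n, (i : ℕ) < n - 1 → ((g i : Fin n) : ℕ) < n - 1 := by
    intro i hi
    by_contra hcon
    push_neg at hcon
    have h1 : g (g i) = g i := hg (g i) hcon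
    have h2 : g i = i := g.injective h1
    rw [h2] at hcon; omega
  let g' : Fin (n - 1) → Fin (n - 1) := fun i =>
    ⟨((g (Fin.castLE (Nat.sub_le n 1) i) : Fin n) : ℕ), key _ (by simp)⟩
  have hinj : Function.Injective g' := by
    intro a b hab
    apply Fin.castLE_injective (Nat.sub_le n 1)
    apply g.injective
    apply Fin.ext
    simpa [g', Fin.ext_iff] using hab
  let e : Equiv.Perm (Fin (n - 1)) :=
    Equiv.ofBijective g' (Finite.injective_iff_bijective.mp hinj)
  have hcomp : (g : Fin n → Fin n) ∘ Fin.castLE (Nat.sub_le n 1) =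
      Fin.castLE (Nat.sub_le n 1) ∘ (e : Fin (n - 1) → Fin (n - 1)) := by
    funext i
    exact (Fin.ext rfl : Fin.castLE (Nat.sub_le n 1) (e i) = g (Fin.castLE (Nat.sub_le n 1) i)).symm
  calc (rename (g : Fin n → Fin n))
        ((rename (Fin.castLE (Nat.sub_le n 1))) (esymm (Fin (n - 1)) ℚ m))
      = rename ((g : Fin n → Fin n) ∘ Fin.castLE (Nat.sub_le n 1))
          (esymm (Fin (n - 1)) ℚ m) := rename_rename _ _ _
    _ = rename (Fin.castLE (Nat.sub_le n 1) ∘ (e : Fin (n - 1) → Fin (n - 1)))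
          (esymm (Fin (n - 1)) ℚ m) := by rw [hcomp]
    _ = rename (Fin.castLE (Nat.sub_le n 1))
          (rename (e : Fin (n - 1) → Fin (n - 1)) (esymm (Fin (n - 1)) ℚ m)) :=
        (rename_rename _ _ _).symm
    _ = rename (Fin.castLE (Nat.sub_le n 1)) (esymm (Fin (n - 1)) ℚ m) := by
        rw [rename_esymm]

/-- `e_m(x_1,…,x_{n−1})` as an element of `R^{S_{n−1}}`. -/
def eI (n m : ℕ) : RIa n := ⟨esymmFirst n m, esymmFirst_mem_RI n m⟩

open TensorProduct in
/-- `T = R^{S_{n−1}} ⊗_{R^{S_n}} R^{S_{n−1}}`, regarded as a right `R^{S_{n−1}}`-module via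
the action on the second tensor factor (a type synonym carrying exactly this module
structure). -/
def TT (n : ℕ) := (RIa n) ⊗[RWa n] (RIa n)

open TensorProduct in
instance (n : ℕ) : AddCommMonoid (TT n) :=
  inferInstanceAs (AddCommMonoid ((RIa n) ⊗[RWa n] (RIa n)))

open TensorProduct in
/-- The right `R^{S_{n−1}}`-module structure on `T`, through the action on the second
tensor factor. -/
instance (n : ℕ) : Module (RIa n) (TT n) :=
  ((Algebra.TensorProduct.includeRight :
      (RIa n) →ₐ[RWa n] (RIa n) ⊗[RWa n] (RIa n)).toRingHom).toModule

open TensorProduct in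
/-- The element `x_n^i ⊗ 1` of `T`. -/
def vT (n i : ℕ) : TT n :=
  show (RIa n) ⊗[RWa n] (RIa n) from xnpow n i ⊗ₜ[RWa n] (1 : RIa n)

/-! ### Independence of the powers of the last variable -/

lemma mem_RWa_iff (n : ℕ) (x : Rr n) :
    x ∈ RWa n ↔ ∀ g : Equiv.Perm (Fin n), rename (g : Fin n → Fin n) x = x := by
  rw [mem_invar_iff]
  exact ⟨fun h g => h g fun i hi => absurd i.2 (by omega), fun h g _ => h g⟩

lemma xnn_succ (m : ℕ) : xnn (m + 1) = X (Fin.last m) := by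
  unfold xnn
  rw [dif_pos m.succ_pos]
  congr 1
  ext
  simp

lemma coe_algebraMap_RI (n : ℕ) (w : RWa n) :
    ((algebraMap (RWa n) (RIa n) w : RIa n) : Rr n) = w := by
  have h : algebraMap (RWa n) (RIa n) = (Subalgebra.inclusion (RW_le_RI n)).toRingHom :=
    RingHom.algebraMap_toAlgebra _
  rw [h]
  exact Subalgebra.coe_inclusion _ w

lemma coe_smul_RI (n : ℕ) (w : RWa n) (r : RIa n) : ((w • r : RIa n) : Rr n) = w * r := by
  rw [Algebra.smul_def, MulMemClass.coe_mul, coe_algebraMap_RI]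

lemma linearIndependent_xnpow (m : ℕ) :
    LinearIndependent (RWa (m + 1)) (fun i : Fin (m + 1) => xnpow (m + 1) i) := by
  rw [Fintype.linearIndependent_iff]
  intro g hg
  have h0 : ∑ i, (g i : Rr (m + 1)) * X (Fin.last m) ^ (i : ℕ) = 0 := by
    have := congrArg (fun r : RIa (m + 1) => (r : Rr (m + 1))) hg
    simpa [coe_smul_RI, xnpow, xnn_succ] using this
  -- `p` has every variable as a root but degree at most `m`
  set p : Polynomial (Rr (m + 1)) :=
    ∑ i, Polynomial.C (g i : Rr (m + 1)) * Polynomial.X ^ (i : ℕ) with hp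
  have hroot : ∀ j : Fin (m + 1), p.eval (X j) = 0 := by
    intro j
    have h1 := congrArg (rename (Equiv.swap j (Fin.last m) : Fin (m + 1) → Fin (m + 1))) h0
    simp only [map_sum, map_mul, map_pow, rename_X, Equiv.swap_apply_right, map_zero] at h1
    simp only [hp, Polynomial.eval_finsetSum, Polynomial.eval_mul, Polynomial.eval_C,
      Polynomial.eval_pow, Polynomial.eval_X]
    rw [← h1]
    refine Finset.sum_congr rfl fun i _ => ?_
    rw [(mem_RWa_iff _ _).1 (g i).2]
  have hdeg : p.natDegree < Fintype.card (Fin (m + 1)) := by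
    rw [Fintype.card_fin, Nat.lt_succ_iff]
    refine Polynomial.natDegree_sum_le_of_forall_le _ _ fun i _ => ?_
    exact (Polynomial.natDegree_C_mul_X_pow_le _ _).trans (Nat.lt_succ_iff.1 i.2)
  have hp0 := Polynomial.eq_zero_of_natDegree_lt_card_of_eval_eq_zero p
    (X_injective (R := ℚ)) hroot hdeg
  intro i
  have hc := congrArg (fun q => Polynomial.coeff q (i : ℕ)) hp0
  simp only [hp, Polynomial.finsetSum_coeff, Polynomial.coeff_C_mul_X_pow, Fin.val_inj,
    Finset.sum_ite_eq, Finset.mem_univ, if_true, Polynomial.coeff_zero] at hc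
  exact Subtype.ext hc

/-! ### Generation by the powers of the last variable -/

/-- The witness is the descent of `∏ (T - x_i)` to `R^W`: permuting the variables permutes the
factors, so the coefficients are symmetric. -/
lemma exists_monic_root (m : ℕ) : ∃ q : Polynomial (RWa (m + 1)),
    q.Monic ∧ q.natDegree = m + 1 ∧ Polynomial.aeval (X (Fin.last m) : Rr (m + 1)) q = 0 := by
  set P : Polynomial (Rr (m + 1)) := ∏ i : Fin (m + 1), (Polynomial.X - Polynomial.C (X i))
    with hP
  have hmonic : P.Monic := Polynomial.monic_prod_of_monic _ _ fun i _ => Polynomial.monic_X_sub_C _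
  have hlift : P ∈ Polynomial.lifts (algebraMap (RWa (m + 1)) (Rr (m + 1))) := by
    rw [Polynomial.lifts_iff_coeff_lifts]
    intro k
    refine ⟨⟨P.coeff k, (mem_RWa_iff _ _).2 fun g => ?_⟩, rfl⟩
    have hinv : P.map (rename (g : Fin (m + 1) → Fin (m + 1)) :
        Rr (m + 1) →ₐ[ℚ] Rr (m + 1)).toRingHom = P := by
      simp only [hP, Polynomial.map_prod, Polynomial.map_sub, Polynomial.map_X, Polynomial.map_C,
        AlgHom.toRingHom_eq_coe, RingHom.coe_coe, rename_X]
      exact Equiv.prod_comp g fun i => (Polynomial.X - Polynomial.C (X i : Rr (m + 1)))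
    conv_rhs => rw [← hinv]
    rw [Polynomial.coeff_map]
    rfl
  obtain ⟨q, hq, hqd, hqm⟩ := Polynomial.lifts_and_natDegree_eq_and_monic hlift hmonic
  refine ⟨q, hqm, ?_, ?_⟩
  · rw [hqd, hP, Polynomial.natDegree_prod_of_monic _ _ fun i _ => Polynomial.monic_X_sub_C _]
    simp
  · rw [Polynomial.aeval_def, ← Polynomial.eval_map, hq, hP, Polynomial.eval_prod]
    exact Finset.prod_eq_zero (Finset.mem_univ (Fin.last m)) (by simp)

/-- The subalgebra `R^W[x_n]` of `R`, as a `ℚ`-algebra. -/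
def adjoinLast (m : ℕ) : Subalgebra ℚ (Rr (m + 1)) :=
  (Polynomial.aeval (R := RWa (m + 1)) (X (Fin.last m) : Rr (m + 1))).range.restrictScalars ℚ

lemma RW_le_adjoinLast (m : ℕ) : RWa (m + 1) ≤ adjoinLast m := fun x hx =>
  ⟨Polynomial.C ⟨x, hx⟩, Polynomial.aeval_C _ _⟩

lemma X_last_mem_adjoinLast (m : ℕ) : (X (Fin.last m) : Rr (m + 1)) ∈ adjoinLast m :=
  ⟨Polynomial.X, Polynomial.aeval_X _⟩

/-- The recursion `e_{k+1} = e'_{k+1} + x_{m+1} e'_k`, where `e'` refers to the first `m`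
variables. -/
lemma esymm_succ_last (m k : ℕ) :
    esymm (Fin (m + 1)) ℚ (k + 1) = rename Fin.castSucc (esymm (Fin m) ℚ (k + 1)) +
      X (Fin.last m) * rename Fin.castSucc (esymm (Fin m) ℚ k) := by
  have h : ∀ j, rename Fin.castSucc (esymm (Fin m) ℚ j) =
      ((Finset.univ : Finset (Fin m)).val.map fun i => (X i.castSucc : Rr (m + 1))).esymm j :=
    fun j => by
      rw [rename_eq_aeval]
      exact aeval_esymm_eq_multiset_esymm (Fin m) ℚ (S := Rr (m + 1)) j _
  -- the variables, as a multiset, split into the last one and the first `m`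
  have hu : (Finset.univ : Finset (Fin (m + 1))).val.map (X : Fin (m + 1) → Rr (m + 1)) =
      X (Fin.last m) ::ₘ (Finset.univ : Finset (Fin m)).val.map fun i => X i.castSucc := by
    rw [Fin.univ_castSuccEmb, Finset.cons_val, Multiset.map_cons, Finset.map_val,
      Multiset.map_map]
    rfl
  rw [h, h, esymm_eq_multiset_esymm, hu]
  simp only [Multiset.esymm, Multiset.powersetCard_cons, Multiset.map_add, Multiset.sum_add,
    Multiset.map_map, Function.comp_def, Multiset.prod_cons, Multiset.sum_map_mul_left]

lemma rename_esymm_mem_adjoinLast (m k : ℕ) :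
    rename Fin.castSucc (esymm (Fin m) ℚ k) ∈ adjoinLast m := by
  induction k with
  | zero => simp
  | succ k ih =>
    rw [← sub_eq_of_eq_add (esymm_succ_last m k)]
    refine sub_mem (RW_le_adjoinLast m ?_) (mul_mem (X_last_mem_adjoinLast m) ih)
    exact (mem_RWa_iff _ _).2 fun g => rename_esymm _ _ _ g

/-- By the fundamental theorem on symmetric polynomials it suffices to treat the elementary ones. -/
lemma rename_symmetric_mem_adjoinLast (m : ℕ) (c : Rr m) (hc : c.IsSymmetric) :
    rename Fin.castSucc c ∈ adjoinLast m := by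
  obtain ⟨q, hq⟩ := esymmAlgHom_fin_surjective ℚ (le_refl m) ⟨c, hc⟩
  have hq' : aeval (fun i : Fin m => esymm (Fin m) ℚ (i + 1)) q = c := by
    rw [← esymmAlgHom_apply, hq]
  rw [← hq', ← AlgHom.comp_apply, comp_aeval]
  have hmem := AlgHom.mem_range_self
    (aeval fun i : Fin m => rename Fin.castSucc (esymm (Fin m) ℚ (i + 1))) q
  rw [← Algebra.adjoin_range_eq_range_aeval] at hmem
  refine Algebra.adjoin_le ?_ hmem
  rintro _ ⟨i, rfl⟩
  exact rename_esymm_mem_adjoinLast m _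

/-- `R` viewed as polynomials in the last variable: `ℚ[x_1,…,x_{m+1}] → ℚ[x_1,…,x_m][T]`,
`x_{m+1} ↦ T`. -/
def splitLast (m : ℕ) : Rr (m + 1) →ₐ[ℚ] Polynomial (Rr m) :=
  aeval (Fin.lastCases Polynomial.X fun i => Polynomial.C (X i))

/-- Substituting `x_{m+1}` for `T` recovers `f` from `splitLast m f`. -/
lemma eval₂_splitLast (m : ℕ) (f : Rr (m + 1)) :
    (splitLast m f).eval₂ (rename Fin.castSucc : Rr m →ₐ[ℚ] Rr (m + 1)).toRingHom
      (X (Fin.last m)) = f := by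
  induction f using MvPolynomial.induction_on with
  | C a =>
    simp [splitLast, Polynomial.algebraMap_apply, MvPolynomial.algebraMap_eq]
  | add p q hp hq => rw [map_add, Polynomial.eval₂_add, hp, hq]
  | mul_X p i hp =>
    rw [map_mul, Polynomial.eval₂_mul, hp]
    congr 1
    refine Fin.lastCases ?_ (fun j => ?_) i <;> simp [splitLast]

lemma exists_perm_extend (m : ℕ) (e : Equiv.Perm (Fin m)) :
    ∃ g : Equiv.Perm (Fin (m + 1)), g (Fin.last m) = Fin.last m ∧
      ∀ i : Fin m, g i.castSucc = (e i).castSucc := by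
  refine ⟨finSuccEquivLast.trans ((Equiv.optionCongr e).trans finSuccEquivLast.symm), ?_, ?_⟩ <;>
    simp

lemma splitLast_rename (m : ℕ) (e : Equiv.Perm (Fin m)) (g : Equiv.Perm (Fin (m + 1)))
    (hl : g (Fin.last m) = Fin.last m) (hg : ∀ i : Fin m, g i.castSucc = (e i).castSucc)
    (f : Rr (m + 1)) :
    splitLast m (rename g f) =
      (splitLast m f).map (rename e : Rr m →ₐ[ℚ] Rr m).toRingHom := by
  induction f using MvPolynomial.induction_on with
  | C a => simp [splitLast, Polynomial.algebraMap_apply, MvPolynomial.algebraMap_eq]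
  | add p q hp hq => rw [map_add, map_add, hp, hq, map_add, Polynomial.map_add]
  | mul_X p i hp =>
    rw [map_mul, map_mul, hp, map_mul, Polynomial.map_mul]
    congr 1
    refine Fin.lastCases ?_ (fun j => ?_) i <;> simp [splitLast, hl, hg]

lemma coeff_splitLast_isSymmetric (m : ℕ) (f : RIa (m + 1)) (k : ℕ) :
    ((splitLast m f).coeff k).IsSymmetric := by
  intro e
  obtain ⟨g, hl, hg⟩ := exists_perm_extend m e
  have hf : rename g (f : Rr (m + 1)) = f := by
    refine (mem_invar_iff _ _ _).1 f.2 g fun i hi => ?_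
    have : i = Fin.last m := by ext; simp at hi ⊢; omega
    rw [this, hl]
  have h := splitLast_rename m e g hl hg f
  rw [hf] at h
  conv_rhs => rw [h, Polynomial.coeff_map]
  rfl

lemma RI_le_adjoinLast (m : ℕ) : RIa (m + 1) ≤ adjoinLast m := by
  intro f hf
  rw [← eval₂_splitLast m f, Polynomial.eval₂_eq_sum, Polynomial.sum_def]
  refine sum_mem fun k _ => mul_mem ?_ (pow_mem (X_last_mem_adjoinLast m) k)
  exact rename_symmetric_mem_adjoinLast m _ (coeff_splitLast_isSymmetric m ⟨f, hf⟩ k)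

lemma span_xnpow (m : ℕ) :
    Submodule.span (RWa (m + 1)) (Set.range fun i : Fin (m + 1) => xnpow (m + 1) i) = ⊤ := by
  rw [eq_top_iff]
  rintro f -
  obtain ⟨p, hp⟩ := RI_le_adjoinLast m f.2
  obtain ⟨q, hqm, hqd, hq0⟩ := exists_monic_root m
  replace hp : Polynomial.aeval (X (Fin.last m) : Rr (m + 1)) (p %ₘ q) = f := by
    rw [Polynomial.aeval_modByMonic_eq_self_of_root hq0]
    exact hp
  have hlt : (p %ₘ q).natDegree < m + 1 := by
    refine (Polynomial.natDegree_modByMonic_lt p hqm ?_).trans_eq hqd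
    rintro rfl
    simp at hqd
  have hf : f = ∑ i : Fin (m + 1), (p %ₘ q).coeff i • xnpow (m + 1) i := by
    apply Subtype.ext
    rw [← hp, Polynomial.aeval_eq_sum_range' hlt, Finset.sum_range]
    simp only [AddSubmonoidClass.coe_finsetSum, coe_smul_RI, xnpow, xnn_succ]
    rfl
  rw [hf]
  exact sum_mem fun i _ => Submodule.smul_mem _ _ (Submodule.subset_span ⟨i, rfl⟩)

/-! ### Base change to the tensor product -/

open TensorProduct in
/-- Exchanging the factors turns multiplication by `1 ⊗ r` into the standard left action of `r`. -/
lemma comm_one_tmul_mul (n : ℕ) (r : RIa n) (t : (RIa n) ⊗[RWa n] (RIa n)) :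
    Algebra.TensorProduct.comm (RWa n) (RIa n) (RIa n) (((1 : RIa n) ⊗ₜ[RWa n] r) * t) =
      r • Algebra.TensorProduct.comm (RWa n) (RIa n) (RIa n) t := by
  rw [map_mul, Algebra.TensorProduct.comm_tmul, Algebra.smul_def]
  rfl

open TensorProduct in
/-- Exchanging the factors identifies the right module `TT n` with `R^I ⊗ R^I`
equipped with its standard left module structure. -/
def TTcomm (n : ℕ) : TT n ≃ₗ[RIa n] (RIa n) ⊗[RWa n] (RIa n) :=
  AddEquiv.toLinearEquiv
    (show TT n ≃+ (RIa n) ⊗[RWa n] (RIa n) from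
      (Algebra.TensorProduct.comm (RWa n) (RIa n) (RIa n)).toAddEquiv)
    (comm_one_tmul_mul n)

/-- `R^I ⊗_{R^W} R^I`, as a right `R^I`-module via the second tensor
factor, is free with basis `{x_n^i ⊗ 1 : 0 ≤ i ≤ n−1}`. -/
theorem tensor_free_right_module (n : ℕ) (hn : 2 ≤ n) :
    LinearIndependent (RIa n) (fun i : Fin n => vT n (i : ℕ)) ∧
    Submodule.span (RIa n) (Set.range fun i : Fin n => vT n (i : ℕ)) = ⊤ := by
  obtain ⟨m, rfl⟩ : ∃ m, n = m + 1 := ⟨n - 1, by omega⟩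
  let b := Module.Basis.mk (linearIndependent_xnpow m) (span_xnpow m).ge
  let B := (b.baseChange (RIa (m + 1))).map (TTcomm (m + 1)).symm
  have hB : ⇑B = fun i : Fin (m + 1) => vT (m + 1) (i : ℕ) := by
    funext i
    have hi : b i = xnpow (m + 1) i := Module.Basis.mk_apply _ _ i
    rw [Module.Basis.map_apply, Module.Basis.baseChange_apply, hi]
    rfl
  rw [← hB]
  exact ⟨B.linearIndependent, B.span_eq⟩

end
end
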